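/- Let X^m and Y^m be jointly distributed random variables taking values in finite sets. Then the directed information equals the sum of the InfoMat entries on and above the main diagonal: I(X^m → Y^m) = Σ_{1 ≤ i ≤ j ≤ m} I(X_i; Y_j | X^{i-1}, Y^{j-1}). -/

import Mathlib

open MeasureTheory Finset

variable {Ω : Type*} [MeasurableSpace Ω]

/-- Shannon entropy of a random variable `W` with values in a finite set:
`H(W) = -∑ w, P(W = w) log P(W = w)`. -/
noncomputable def entropy (μ : Measure Ω) {α : Type*} [Fintype α] (W : Ω → α) : ℝ :=
  -∑ w : α, (μ (W ⁻¹' {w})).toReal * Real.log (μ (W ⁻¹' {w})).toReal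

/-- Conditional entropy `H(W | V) = H(W, V) - H(V)`. -/
noncomputable def condEntropy (μ : Measure Ω) {α β : Type*} [Fintype α] [Fintype β]
    (W : Ω → α) (V : Ω → β) : ℝ :=
  entropy μ (fun ω => (W ω, V ω)) - entropy μ V

/-- Conditional mutual information `I(A; B | C) = H(A|C) + H(B|C) - H(A,B|C)`. -/
noncomputable def condMI (μ : Measure Ω) {α β γ : Type*} [Fintype α] [Fintype β] [Fintype γ]
    (A : Ω → α) (B : Ω → β) (C : Ω → γ) : ℝ :=
  condEntropy μ A C + condEntropy μ B C - condEntropy μ (fun ω => (A ω, B ω)) C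

/-- Mutual information `I(A; B) = H(A) + H(B) - H(A,B)`. -/
noncomputable def mutualInfo (μ : Measure Ω) {α β : Type*} [Fintype α] [Fintype β]
    (A : Ω → α) (B : Ω → β) : ℝ :=
  entropy μ A + entropy μ B - entropy μ (fun ω => (A ω, B ω))

/-- The prefix `X^i = (X_1, …, X_i)` of the sequence `X` (1-based indexing);
`X^0` is the empty (constant) random variable. -/
def pref {𝒳 : Type*} (X : ℕ → Ω → 𝒳) (i : ℕ) : Ω → (Fin i → 𝒳) :=
  fun ω t => X (t.1 + 1) ω

/-- The InfoMat entry `I_{i,j} = I(X_i; Y_j | X^{i-1}, Y^{j-1})`. -/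
noncomputable def infoMat (μ : Measure Ω) {𝒳 𝒴 : Type*} [Fintype 𝒳] [Fintype 𝒴]
    (X : ℕ → Ω → 𝒳) (Y : ℕ → Ω → 𝒴) (i j : ℕ) : ℝ :=
  condMI μ (X i) (Y j) (fun ω => (pref X (i - 1) ω, pref Y (j - 1) ω))

/-- Directed information `I(X^m → Y^m) = ∑_{i=1}^m I(X^i; Y_i | Y^{i-1})`. -/
noncomputable def directedInfo (μ : Measure Ω) {𝒳 𝒴 : Type*} [Fintype 𝒳] [Fintype 𝒴]
    (m : ℕ) (X : ℕ → Ω → 𝒳) (Y : ℕ → Ω → 𝒴) : ℝ :=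
  ∑ i ∈ Finset.Icc 1 m, condMI μ (pref X i) (Y i) (pref Y (i - 1))

/-- `k`-step delayed directed information
`I(D^k ∘ X^m → Y^m) = ∑_{i=k+1}^m I(X^{i-k}; Y_i | Y^{i-1})`. -/
noncomputable def delayedDI (μ : Measure Ω) {𝒳 𝒴 : Type*} [Fintype 𝒳] [Fintype 𝒴]
    (m k : ℕ) (X : ℕ → Ω → 𝒳) (Y : ℕ → Ω → 𝒴) : ℝ :=
  ∑ i ∈ Finset.Icc (k + 1) m, condMI μ (pref X (i - k)) (Y i) (pref Y (i - 1))

/-- Instantaneous information `I_inst(X^m, Y^m) = ∑_{i=1}^m I(X_i; Y_i | X^{i-1}, Y^{i-1})`. -/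
noncomputable def instInfo (μ : Measure Ω) {𝒳 𝒴 : Type*} [Fintype 𝒳] [Fintype 𝒴]
    (m : ℕ) (X : ℕ → Ω → 𝒳) (Y : ℕ → Ω → 𝒴) : ℝ :=
  ∑ i ∈ Finset.Icc 1 m, infoMat μ X Y i i

variable {𝒳 𝒴 : Type*} [Fintype 𝒳] [MeasurableSpace 𝒳] [MeasurableSingletonClass 𝒳]
  [Fintype 𝒴] [MeasurableSpace 𝒴] [MeasurableSingletonClass 𝒴]

/-!
Since `I(A; B | C) = H(B | C) - H(B | A, C)`, conditional mutual information satisfies the chain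
rule `I(A₁, A₂; B | C) = I(A₂; B | C) + I(A₁; B | A₂, C)`. It splits the summand
`I(X^j; Y_j | Y^{j-1})` of the directed information into the entries `I_{1,j}, …, I_{j,j}` of the
`j`-th column of the InfoMat, and exchanging the order of summation gives the theorem. The
chain rule only rests on the invariance of entropy under injective relabelling of values.
-/

section ChainRule

variable {α α₁ α₂ β γ δ : Type*} [Fintype α] [Fintype α₁] [Fintype α₂] [Fintype β] [Fintype γ]
  [Fintype δ] (μ : Measure Ω)

theorem entropy_comp_of_injective {f : α → β} (hf : Function.Injective f) (W : Ω → α) :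
    entropy μ (fun ω => f (W ω)) = entropy μ W := by
  have preimage_apply (a : α) : (fun ω => f (W ω)) ⁻¹' {f a} = W ⁻¹' {a} :=
    Set.ext fun _ => hf.eq_iff
  have preimage_of_notMem_range (b : β) (hb : b ∉ Set.range f) :
      (fun ω => f (W ω)) ⁻¹' {b} = ∅ :=
    Set.eq_empty_of_forall_notMem fun ω hω => hb ⟨W ω, hω⟩
  refine congrArg Neg.neg (Fintype.sum_of_injective f hf _ _ ?_ ?_).symm
  · intro b hb
    simp [preimage_of_notMem_range b hb]
  · intro a
    rw [preimage_apply]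

theorem condEntropy_comp_right_of_injective {f : γ → δ} (hf : Function.Injective f)
    (W : Ω → α) (V : Ω → γ) :
    condEntropy μ W (fun ω => f (V ω)) = condEntropy μ W V :=
  congrArg₂ (· - ·)
    (entropy_comp_of_injective μ (Function.injective_id.prodMap hf) fun ω => (W ω, V ω))
    (entropy_comp_of_injective μ hf V)

theorem condMI_eq_condEntropy_sub (A : Ω → α) (B : Ω → β) (C : Ω → γ) :
    condMI μ A B C = condEntropy μ B C - condEntropy μ B (fun ω => (A ω, C ω)) := by
  have entropy_rearrange :
      entropy μ (fun ω => (B ω, A ω, C ω)) = entropy μ (fun ω => ((A ω, B ω), C ω)) :=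
    entropy_comp_of_injective μ
      (((Equiv.prodComm α β).prodCongr (Equiv.refl γ)).trans (Equiv.prodAssoc β α γ)).injective
      fun ω => ((A ω, B ω), C ω)
  simp only [condMI, condEntropy, entropy_rearrange]
  ring

theorem condMI_comp_left_of_injective {f : α₁ → α₂} (hf : Function.Injective f)
    (A : Ω → α₁) (B : Ω → β) (C : Ω → γ) :
    condMI μ (fun ω => f (A ω)) B C = condMI μ A B C := by
  simp only [condMI_eq_condEntropy_sub]
  exact congrArg (condEntropy μ B C - ·) <|
    condEntropy_comp_right_of_injective μ (hf.prodMap Function.injective_id) B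
      fun ω => (A ω, C ω)

theorem condMI_of_subsingleton_left [Subsingleton α] (A : Ω → α) (B : Ω → β) (C : Ω → γ) :
    condMI μ A B C = 0 := by
  have snd_injective : Function.Injective (Prod.snd : α × γ → γ) :=
    fun _ _ h => Prod.ext (Subsingleton.elim _ _) h
  rw [condMI_eq_condEntropy_sub, sub_eq_zero]
  exact condEntropy_comp_right_of_injective μ snd_injective B fun ω => (A ω, C ω)

theorem condMI_prod_left (A₁ : Ω → α₁) (A₂ : Ω → α₂) (B : Ω → β) (C : Ω → γ) :
    condMI μ (fun ω => (A₁ ω, A₂ ω)) B C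
      = condMI μ A₂ B C + condMI μ A₁ B (fun ω => (A₂ ω, C ω)) := by
  have condEntropy_assoc : condEntropy μ B (fun ω => (A₁ ω, A₂ ω, C ω))
      = condEntropy μ B (fun ω => ((A₁ ω, A₂ ω), C ω)) :=
    condEntropy_comp_right_of_injective μ (Equiv.prodAssoc α₁ α₂ γ).injective B
      fun ω => ((A₁ ω, A₂ ω), C ω)
  simp only [condMI_eq_condEntropy_sub, condEntropy_assoc]
  ring

end ChainRule

section Prefix

variable {α β γ : Type*}

theorem pref_succ {S : Type*} (X : ℕ → S → α) (n : ℕ) :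
    pref X (n + 1) = fun ω => Fin.snocEquiv (fun _ => α) (X (n + 1) ω, pref X n ω) := by
  funext ω
  exact (Fin.snoc_init_self (pref X (n + 1) ω)).symm

variable [Fintype α] [Fintype β] [Fintype γ] (μ : Measure Ω)

theorem condMI_pref_succ (X : ℕ → Ω → α) (B : Ω → β) (C : Ω → γ) (n : ℕ) :
    condMI μ (pref X (n + 1)) B C
      = condMI μ (pref X n) B C + condMI μ (X (n + 1)) B (fun ω => (pref X n ω, C ω)) := by
  rw [pref_succ, condMI_comp_left_of_injective μ (Fin.snocEquiv fun _ => α).injective,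
    condMI_prod_left]

theorem condMI_pref_eq_sum (X : ℕ → Ω → α) (B : Ω → β) (C : Ω → γ) (n : ℕ) :
    condMI μ (pref X n) B C
      = ∑ i ∈ Icc 1 n, condMI μ (X i) B (fun ω => (pref X (i - 1) ω, C ω)) := by
  induction n with
  | zero => exact condMI_of_subsingleton_left μ (pref X 0) B C
  | succ n ih =>
    rw [condMI_pref_succ, ih, sum_Icc_succ_top (Nat.le_add_left 1 n), Nat.add_sub_cancel]

theorem directedInfo_eq_sum_upper_infoMat_general (m : ℕ) (X : ℕ → Ω → α) (Y : ℕ → Ω → β) :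
    directedInfo μ m X Y = ∑ i ∈ Icc 1 m, ∑ j ∈ Icc i m, infoMat μ X Y i j :=
  calc directedInfo μ m X Y
    _ = ∑ j ∈ Icc 1 m, ∑ i ∈ Icc 1 j, infoMat μ X Y i j :=
      sum_congr rfl fun j _ => condMI_pref_eq_sum μ X (Y j) (pref Y (j - 1)) j
    _ = ∑ i ∈ Icc 1 m, ∑ j ∈ Icc i m, infoMat μ X Y i j :=
      sum_comm' fun j i => by simp only [mem_Icc]; omega

end Prefix

/-- Directed information is the sum of the InfoMat entries on and above the
main diagonal: `I(X^m → Y^m) = ∑_{1 ≤ i ≤ j ≤ m} I(X_i; Y_j | X^{i-1}, Y^{j-1})`. -/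
theorem directedInfo_eq_sum_upper_infoMat (μ : Measure Ω) [IsProbabilityMeasure μ]
    (m : ℕ) (X : ℕ → Ω → 𝒳) (Y : ℕ → Ω → 𝒴)
    (hX : ∀ i, Measurable (X i)) (hY : ∀ j, Measurable (Y j)) :
    directedInfo μ m X Y
      = ∑ i ∈ Finset.Icc 1 m, ∑ j ∈ Finset.Icc i m, infoMat μ X Y i j :=
  directedInfo_eq_sum_upper_infoMat_general μ m X Y
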